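/- For every iterative learner M from informant there exists a canny iterative learner N from informant such that every language Ex-learned from informant by M is Ex-learned from informant by N, i.e. InfEx(M) ⊆ InfEx(N). -/

import Mathlib

/-!
The learner `N` remembers, next to the current hypothesis of `M`, the data that have caused a mind
change so far, and ignores any datum in this memory; both are coded into the hypothesis by padding,
so `N` stays iterative. A datum that changes the state of `N` enters the memory and is ignored from
then on, so `N` is canny. On an informant `I` for `L`, the data that `N` does not ignore form a
subsequence of `I` which still contains every datum of `I`, hence is itself an informant for `L`,
and the hypotheses of `M` on it are the ones stored by `N`. When `M` has converged on the
subsequence, the memory no longer grows, so `N` converges as well.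
-/

/-- `W p` is the domain of the `p`-th partial computable function
(the `W`-hypothesis space for an acceptable numbering). -/
def W (p : ℕ) : Set ℕ := {n | ((Denumerable.ofNat Nat.Partrec.Code p).eval n).Dom}

/-- A labeled datum: a natural number together with a Boolean label. -/
abbrev Datum := ℕ × Bool

/-- The initial segment `I[t]` of an informant `I`, of length `t`. -/
def seg (I : ℕ → Datum) (t : ℕ) : List Datum := (List.range t).map I

/-- The positively labeled numbers occurring in a finite sequence. -/
def posOf (σ : List Datum) : Set ℕ := {x | (x, true) ∈ σ}

/-- The negatively labeled numbers occurring in a finite sequence. -/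
def negOf (σ : List Datum) : Set ℕ := {x | (x, false) ∈ σ}

/-- A finite sequence over ℕ × Bool is consistently labeled. -/
def ConsistentSeq (σ : List Datum) : Prop :=
  ∀ x b b', (x, b) ∈ σ → (x, b') ∈ σ → b = b'

/-- `I` is an informant for the language `L`. -/
def IsInformant (L : Set ℕ) (I : ℕ → Datum) : Prop :=
  (∀ t, ((I t).2 = true ↔ (I t).1 ∈ L)) ∧ Function.Surjective (fun t => (I t).1)

/-- `M` Ex-learns `L` from the particular informant `I`. -/
def ExLearnsFrom (M : List Datum →. ℕ) (L : Set ℕ) (I : ℕ → Datum) : Prop :=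
  ∃ t₀ e, W e = L ∧ ∀ t, t₀ ≤ t → M (seg I t) = Part.some e

/-- `M` Ex-learns `L` from informant. -/
def ExLearns (M : List Datum →. ℕ) (L : Set ℕ) : Prop :=
  ∀ I, IsInformant L I → ExLearnsFrom M L I

/-- `M` is an iterative learner: its value on `σ⌢x` is computed from its
value on `σ` and the datum `x` alone. -/
def Iterative (M : List Datum →. ℕ) : Prop :=
  ∃ h : ℕ × Datum →. ℕ, Partrec h ∧
    ∀ σ x, M (σ ++ [x]) = (M σ).bind (fun e => h (e, x))

/-- `𝓛 ∈ [ItInfEx]`: some iterative partial computable learner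
Ex-learns every member of `𝓛` from informant. -/
def ItInfEx (𝓛 : Set (Set ℕ)) : Prop :=
  ∃ M : List Datum →. ℕ, Partrec M ∧ Iterative M ∧ ∀ L ∈ 𝓛, ExLearns M L

/-- A learner is canny: (the value, when defined, is a hypothesis in ℕ, which is
enforced by the type, and) no single datum not occurring in `σ` causes a mind change twice. -/
def Canny (M : List Datum →. ℕ) : Prop :=
  ∀ (σ : List Datum) (x : ℕ) (b : Bool), x ∉ σ.map Prod.fst →
    ∀ e e', M σ = Part.some e → M (σ ++ [(x, b)]) = Part.some e' → e ≠ e' →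
      ∀ τ : List Datum, (σ ++ [(x, b)]) <+: τ → M (τ ++ [(x, b)]) = M τ

section Partrec

variable {α β : Type*} [Primcodable α] [Primcodable β]

theorem partrec_ite {c : α → Prop} [DecidablePred c] {f g : α →. β}
    (hc : Computable fun a => decide (c a)) (hf : Partrec f) (hg : Partrec g) :
    Partrec fun a => if c a then f a else g a :=
  (Partrec.cond hc hf hg).of_eq fun a => Bool.cond_decide (c a) (f a) (g a)

theorem exists_partrec_leftInverse {f : α → β} (hf : Computable f) (hinj : Function.Injective f) :
    ∃ g : β →. α, Partrec g ∧ ∀ a, g (f a) = Part.some a := by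
  classical
  let candidate (b : β) (n : ℕ) : Option α :=
    (Encodable.decode n).bind fun a => bif decide (f a = b) then some a else none
  have candidate_computable : Computable₂ candidate := by
    refine Computable.option_bind (Computable.decode.comp Computable.snd) ?_
    refine Computable.cond ?_ (Computable.option_some.comp Computable.snd) (Computable.const _)
    exact Primrec.eq.decide.to_comp.comp (hf.comp Computable.snd)
      (Computable.fst.comp Computable.fst)
  have eq_of_mem {a a' n} (h : a' ∈ candidate (f a) n) : a' = a := by
    obtain ⟨a'', -, h⟩ := Option.bind_eq_some_iff.1 h
    by_cases heq : f a'' = f a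
    · simp only [heq, decide_true, cond_true, Option.some_inj] at h
      exact h ▸ hinj heq
    · simp [heq] at h
  refine ⟨fun b => Nat.rfindOpt (candidate b), Partrec.rfindOpt candidate_computable, fun a => ?_⟩
  have hdom : (Nat.rfindOpt (candidate (f a))).Dom :=
    Nat.rfindOpt_dom.2 ⟨Encodable.encode a, a, by simp [candidate]⟩
  obtain ⟨a', ha'⟩ := Part.dom_iff_mem.1 hdom
  obtain ⟨n, hn⟩ := Nat.rfindOpt_spec ha'
  exact Part.eq_some_iff.2 (eq_of_mem hn ▸ ha')

end Partrec

section RunFrom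

variable {α S : Type*}

/-- The partial state reached by the transition function `f` from the partial initial state `a`
on the input word `l`. -/
def runFrom (f : S → α → Part S) (a : Part S) (l : List α) : Part S :=
  l.foldl (fun p x => p.bind fun s => f s x) a

@[simp]
theorem runFrom_nil (f : S → α → Part S) (a : Part S) : runFrom f a [] = a := rfl

theorem runFrom_append (f : S → α → Part S) (a : Part S) (l l' : List α) :
    runFrom f a (l ++ l') = runFrom f (runFrom f a l) l' :=
  List.foldl_append

theorem runFrom_concat (f : S → α → Part S) (a : Part S) (l : List α) (x : α) :
    runFrom f a (l ++ [x]) = (runFrom f a l).bind fun s => f s x :=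
  runFrom_append f a l [x]

theorem eq_runFrom {M : List α →. S} {f : S → α → Part S}
    (hM : ∀ σ x, M (σ ++ [x]) = (M σ).bind fun s => f s x) (σ : List α) :
    M σ = runFrom f (M []) σ := by
  induction σ using List.reverseRecOn with
  | nil => rfl
  | append_singleton σ x ih => rw [hM, ih, runFrom_concat]

theorem runFrom_partrec [Primcodable α] [Primcodable S] {f : S → α → Part S} (hf : Partrec₂ f)
    (a : Part S) : Partrec (runFrom f a) := by
  let stage (l : List α) (n : ℕ) : Part S :=
    Nat.rec a (fun i p => p.bind fun s => (Part.ofOption l[i]?).bind fun x => f s x) n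
  have stage_partrec : Partrec fun l => stage l l.length := by
    refine Partrec.nat_rec Computable.list_length (Partrec.const' a)
      (h := fun l q => (Part.ofOption l[q.1]?).bind fun x => f q.2 x) ?_
    refine Partrec.bind (Computable.ofOption ?_) ?_
    · exact Computable.list_getElem?.comp Computable.fst (Computable.fst.comp Computable.snd)
    · exact hf.comp (Computable.snd.comp (Computable.snd.comp Computable.fst)) Computable.snd
  have stage_eq (l : List α) : ∀ n ≤ l.length, stage l n = runFrom f a (l.take n) := by
    intro n hn
    induction n with
    | zero => rfl
    | succ n ih =>
      rw [List.take_succ_eq_append_getElem hn, runFrom_concat, ← ih (Nat.le_of_succ_le hn)]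
      simp [stage, List.getElem?_eq_getElem hn]
  exact stage_partrec.of_eq fun l => by rw [stage_eq l _ le_rfl, List.take_length]

end RunFrom

theorem iterative_map_runFrom {S : Type*} [Primcodable S] {f : S → Datum → Part S}
    (hf : Partrec₂ f) (a : Part S) {code : S → ℕ} (hcode : Computable code)
    (hinj : Function.Injective code) : Iterative fun σ => (runFrom f a σ).map code := by
  obtain ⟨decode, hdecode, decode_code⟩ := exists_partrec_leftInverse hcode hinj
  refine ⟨fun q => (decode q.1).bind fun s => (f s q.2).map code, ?_, fun σ x => ?_⟩
  · refine (hdecode.comp Computable.fst).bind (Partrec.map ?_ (hcode.comp Computable.snd))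
    exact hf.comp Computable.snd (Computable.snd.comp Computable.fst)
  · simp only [runFrom_concat, Part.bind_map, Part.map_bind, decode_code, Part.bind_some]

theorem Iterative.partrec {M : List Datum →. ℕ} (hM : Iterative M) : Partrec M := by
  obtain ⟨h, hh, hstep⟩ := hM
  exact (runFrom_partrec (f := fun e x => h (e, x)) hh (M [])).of_eq fun σ =>
    (eq_runFrom hstep σ).symm

section Padding

open Nat.Partrec (Code)

variable {α : Type*}

/-- An index of the partial function with index `s.1`, into which the auxiliary information `s.2`
is coded: `s.2` is the fixed first argument of a program that ignores it. -/
def padIndex [Encodable α] (s : ℕ × α) : ℕ :=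
  Encodable.encode
    (Code.curry (Code.comp (Denumerable.ofNat Code s.1) Code.right) (Encodable.encode s.2))

theorem W_padIndex [Encodable α] (s : ℕ × α) : W (padIndex s) = W s.1 := by
  ext n
  have eval_some : (Part.some n >>= (Denumerable.ofNat Code s.1).eval) =
      (Denumerable.ofNat Code s.1).eval n := Part.bind_some _ _
  simp [W, padIndex, Code.eval_curry, Code.eval, eval_some]

theorem padIndex_injective [Encodable α] :
    Function.Injective (padIndex : ℕ × α → ℕ) := by
  rintro ⟨e, a⟩ ⟨e', a'⟩ h
  obtain ⟨hcode, ha⟩ := Code.curry_inj (Encodable.encode_injective h)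
  injection hcode with he
  refine Prod.ext ?_ (Encodable.encode_injective ha)
  simpa only [Denumerable.encode_ofNat] using congrArg Encodable.encode he

theorem padIndex_computable [Primcodable α] : Computable (padIndex : ℕ × α → ℕ) :=
  (Primrec.encode.comp (Code.primrec₂_curry.comp
    (Code.primrec₂_comp.comp ((Primrec.ofNat Code).comp Primrec.fst) (Primrec.const _))
    (Primrec.encode.comp Primrec.snd))).to_comp

end Padding

section Memo

variable {H D : Type*} [DecidableEq H] [DecidableEq D]

/-- One step of the learner with update function `h` that remembers, in the second component of
its state, the data that have caused a mind change, and ignores them from then on. -/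
def memoStep (h : H × D →. H) (s : H × List D) (x : D) : Part (H × List D) :=
  if x ∈ s.2 then Part.some s else
    (h (s.1, x)).map fun e => if e = s.1 then s else (e, x :: s.2)

/-- The state reached by `memoStep h` on a finite sequence, from the hypothesis `a` and an empty
memory. -/
def memoRun (h : H × D →. H) (a : Part H) : List D → Part (H × List D) :=
  runFrom (memoStep h) (a.map fun e => (e, []))

variable {h : H × D →. H} {s s' : H × List D} {x : D}

theorem memoStep_of_mem (hx : x ∈ s.2) : memoStep h s x = Part.some s := if_pos hx

theorem memoStep_of_notMem (hx : x ∉ s.2) :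
    memoStep h s x = (h (s.1, x)).map fun e => if e = s.1 then s else (e, x :: s.2) := if_neg hx

theorem eq_or_eq_cons_of_mem_memoStep (hs : s' ∈ memoStep h s x) :
    s' = s ∨ s'.1 ≠ s.1 ∧ s'.2 = x :: s.2 := by
  by_cases hx : x ∈ s.2
  · rw [memoStep_of_mem hx, Part.mem_some_iff] at hs
    exact Or.inl hs
  · rw [memoStep_of_notMem hx, Part.mem_map_iff] at hs
    obtain ⟨e, -, rfl⟩ := hs
    split_ifs with he
    · exact Or.inl rfl
    · exact Or.inr ⟨he, rfl⟩

theorem memory_subset_of_mem_memoStep (hs : s' ∈ memoStep h s x) : s.2 ⊆ s'.2 := by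
  rcases eq_or_eq_cons_of_mem_memoStep hs with rfl | ⟨-, hmem⟩
  · exact List.Subset.refl _
  · exact hmem ▸ List.subset_cons_self x s.2

theorem map_fst_memoStep_of_notMem (hx : x ∉ s.2) :
    (memoStep h s x).map Prod.fst = h (s.1, x) := by
  rw [memoStep_of_notMem hx, Part.map_map]
  refine Part.map_id' (f := Prod.fst ∘ fun e => if e = s.1 then s else (e, x :: s.2))
    (fun e => ?_) _
  by_cases he : e = s.1 <;> simp [he]

theorem memoStep_partrec [Primcodable H] [Primcodable D] (hh : Partrec h) :
    Partrec₂ (memoStep h) := by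
  refine partrec_ite ?_ Computable.fst (Partrec.map ?_ ?_)
  · have mem_primrec : PrimrecRel fun (l : List D) x => x ∈ l :=
      (Primrec.eq.exists_mem_list).of_eq fun l x => by simp
    exact (mem_primrec.comp (Primrec.snd.comp Primrec.fst) Primrec.snd).decide.to_comp
  · exact hh.comp ((Computable.fst.comp Computable.fst).pair Computable.snd)
  · have state : Primrec fun q : ((H × List D) × D) × H => q.1.1 := Primrec.fst.comp Primrec.fst
    refine (Primrec.ite (Primrec.eq.comp Primrec.snd (Primrec.fst.comp state)) state ?_).to_comp
    exact Primrec.snd.pair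
      (Primrec.list_cons.comp (Primrec.snd.comp Primrec.fst) (Primrec.snd.comp state))

theorem memoRun_concat (h : H × D →. H) (a : Part H) (σ : List D) (x : D) :
    memoRun h a (σ ++ [x]) = (memoRun h a σ).bind fun s => memoStep h s x :=
  runFrom_concat _ _ _ _

theorem mem_memory_of_mem_memoRun_append {a : Part H} {σ : List D} (hσ : s ∈ memoRun h a σ)
    (hx : x ∈ s.2) (ρ : List D) (hs' : s' ∈ memoRun h a (σ ++ ρ)) : x ∈ s'.2 := by
  induction ρ using List.reverseRecOn generalizing s' with
  | nil =>
    rw [List.append_nil] at hs'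
    rwa [Part.mem_unique hs' hσ]
  | append_singleton ρ y ih =>
    rw [← List.append_assoc, memoRun_concat] at hs'
    obtain ⟨r, hr, hstep⟩ := Part.mem_bind_iff.1 hs'
    exact memory_subset_of_mem_memoStep hstep (ih hr)

end Memo

theorem canny_map_memoRun (h : ℕ × Datum →. ℕ) (a : Part ℕ) (code : ℕ × List Datum → ℕ) :
    Canny fun σ => (memoRun h a σ).map code := by
  rintro σ x b - e e' he he' hne _ ⟨ρ, rfl⟩
  obtain ⟨s, hs, rfl⟩ := (Part.mem_map_iff _).1 (Part.eq_some_iff.1 he)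
  obtain ⟨s', hs', rfl⟩ := (Part.mem_map_iff _).1 (Part.eq_some_iff.1 he')
  have hstep : s' ∈ memoStep h s (x, b) := by
    rwa [memoRun_concat, Part.eq_some_iff.2 hs, Part.bind_some] at hs'
  have hmem : (x, b) ∈ s'.2 := by
    rcases eq_or_eq_cons_of_mem_memoStep hstep with rfl | ⟨-, hcons⟩
    · exact absurd rfl hne
    · exact hcons ▸ List.mem_cons_self
  beta_reduce
  rw [memoRun_concat]
  rcases Part.eq_none_or_eq_some (memoRun h a (σ ++ [(x, b)] ++ ρ)) with hnone | ⟨r, hr⟩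
  · rw [hnone, Part.bind_none]
  · have hmem_r := mem_memory_of_mem_memoRun_append hs' hmem ρ (Part.eq_some_iff.1 hr)
    rw [hr, Part.bind_some, memoStep_of_mem hmem_r]

theorem seg_succ (I : ℕ → Datum) (t : ℕ) : seg I (t + 1) = seg I t ++ [I t] := by
  simp [seg, List.range_succ]

section Fresh

variable {h : ℕ × Datum →. ℕ} {a : Part ℕ} {I : ℕ → Datum} {L : Set ℕ}

/-- The datum `I t` is not in the memory when it is read, so `memoStep h` does not ignore it.
This includes the case that the state after `seg I t` is undefined. -/
def Fresh (h : ℕ × Datum →. ℕ) (a : Part ℕ) (I : ℕ → Datum) (t : ℕ) : Prop :=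
  ∀ s ∈ memoRun h a (seg I t), I t ∉ s.2

/-- The subsequence of the data of `I` that are not ignored; were it finite, `Nat.nth` would
continue it with `I 0`. -/
noncomputable def freshSubseq (h : ℕ × Datum →. ℕ) (a : Part ℕ) (I : ℕ → Datum) (n : ℕ) : Datum :=
  I (Nat.nth (Fresh h a I) n)

theorem exists_fresh_of_mem_memory {t : ℕ} {s : ℕ × List Datum}
    (hs : s ∈ memoRun h a (seg I t)) {y : Datum} (hy : y ∈ s.2) :
    ∃ u, Fresh h a I u ∧ I u = y := by
  induction t generalizing s with
  | zero =>
    obtain ⟨e, -, rfl⟩ := (Part.mem_map_iff _).1 hs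
    exact absurd hy List.not_mem_nil
  | succ t ih =>
    rw [seg_succ, memoRun_concat] at hs
    obtain ⟨r, hr, hstep⟩ := Part.mem_bind_iff.1 hs
    by_cases hyr : y ∈ r.2
    · exact ih hr hyr
    · rcases eq_or_eq_cons_of_mem_memoStep hstep with rfl | ⟨-, hcons⟩
      · exact absurd hy hyr
      · obtain rfl : y = I t := (List.mem_cons.1 (hcons ▸ hy)).resolve_right hyr
        exact ⟨t, fun r' hr' => Part.mem_unique hr hr' ▸ hyr, rfl⟩

theorem exists_fresh_eq (h : ℕ × Datum →. ℕ) (a : Part ℕ) (I : ℕ → Datum) (t : ℕ) :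
    ∃ u, Fresh h a I u ∧ I u = I t := by
  by_cases ht : Fresh h a I t
  · exact ⟨t, ht, rfl⟩
  · simp only [Fresh, not_forall, not_not] at ht
    obtain ⟨s, hs, hmem⟩ := ht
    exact exists_fresh_of_mem_memory hs hmem

theorem infinite_setOf_fresh (h : ℕ × Datum →. ℕ) (a : Part ℕ) (hI : (Set.range I).Infinite) :
    {t | Fresh h a I t}.Infinite := by
  refine Set.Infinite.of_image I (hI.mono ?_)
  rintro _ ⟨t, rfl⟩
  exact exists_fresh_eq h a I t

theorem IsInformant.infinite_range (hI : IsInformant L I) : (Set.range I).Infinite := by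
  refine Set.Infinite.of_image Prod.fst ?_
  rw [← Set.range_comp]
  exact hI.2.range_eq ▸ Set.infinite_univ

open Classical in
theorem freshSubseq_count {t : ℕ} (ht : Fresh h a I t) :
    freshSubseq h a I (Nat.count (Fresh h a I) t) = I t :=
  congrArg I (Nat.nth_count ht)

theorem IsInformant.freshSubseq (h : ℕ × Datum →. ℕ) (a : Part ℕ) (hI : IsInformant L I) :
    IsInformant L (freshSubseq h a I) := by
  classical
  refine ⟨fun n => hI.1 _, fun x => ?_⟩
  obtain ⟨t, rfl⟩ := hI.2 x
  obtain ⟨u, hu, hut⟩ := exists_fresh_eq h a I t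
  exact ⟨Nat.count (Fresh h a I) u, by simp only [freshSubseq_count hu, hut]⟩

open Classical in
theorem map_fst_memoRun_seg {M : List Datum →. ℕ}
    (hM : ∀ σ x, M (σ ++ [x]) = (M σ).bind fun e => h (e, x)) (I : ℕ → Datum) (t : ℕ) :
    (memoRun h (M []) (seg I t)).map Prod.fst =
      M (seg (freshSubseq h (M []) I) (Nat.count (Fresh h (M []) I) t)) := by
  induction t with
  | zero =>
    simp only [Nat.count_zero, seg, List.range_zero, List.map_nil, memoRun, runFrom_nil,
      Part.map_map]
    exact Part.map_id' (fun _ => rfl) _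
  | succ t ih =>
    rw [seg_succ, memoRun_concat, Part.map_bind, Nat.count_succ]
    by_cases ht : Fresh h (M []) I t
    · rw [if_pos ht, seg_succ, hM, freshSubseq_count ht, ← ih, Part.bind_map]
      ext e
      simp only [Part.mem_bind_iff]
      refine exists_congr fun s => and_congr_right fun hs => ?_
      rw [map_fst_memoStep_of_notMem (ht s hs)]
    · rw [if_neg ht, add_zero, ← ih]
      simp only [Fresh, not_forall, not_not] at ht
      obtain ⟨s, hs, hmem⟩ := ht
      rw [Part.eq_some_iff.2 hs, Part.bind_some, memoStep_of_mem hmem]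

theorem exists_memoRun_seg_eq_some {t₀ e : ℕ}
    (he : ∀ t, t₀ ≤ t → (memoRun h a (seg I t)).map Prod.fst = Part.some e) :
    ∃ l, ∀ t, t₀ ≤ t → memoRun h a (seg I t) = Part.some (e, l) := by
  have exists_state (t : ℕ) (ht : t₀ ≤ t) : ∃ s ∈ memoRun h a (seg I t), s.1 = e :=
    (Part.mem_map_iff _).1 (Part.eq_some_iff.1 (he t ht))
  obtain ⟨⟨_, l⟩, hs, rfl⟩ := exists_state t₀ le_rfl
  refine ⟨l, fun t ht => ?_⟩
  induction t, ht using Nat.le_induction with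
  | base => exact Part.eq_some_iff.2 hs
  | succ t ht ih =>
    obtain ⟨s', hs', hfst⟩ := exists_state (t + 1) (Nat.le_succ_of_le ht)
    have hstep := hs'
    rw [seg_succ, memoRun_concat, ih, Part.bind_some] at hstep
    rcases eq_or_eq_cons_of_mem_memoStep hstep with rfl | ⟨hne, -⟩
    · exact Part.eq_some_iff.2 hs'
    · exact absurd hfst hne

end Fresh

theorem ExLearns.map_memoRun {M : List Datum →. ℕ} {L : Set ℕ} (hL : ExLearns M L)
    {h : ℕ × Datum →. ℕ} (hM : ∀ σ x, M (σ ++ [x]) = (M σ).bind fun e => h (e, x))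
    {code : ℕ × List Datum → ℕ} (hcode : ∀ s, W (code s) = W s.1) :
    ExLearns (fun σ => (memoRun h (M []) σ).map code) L := by
  classical
  intro I hI
  obtain ⟨n₀, e, hW, hconv⟩ := hL _ (hI.freshSubseq h (M []))
  have hinf := infinite_setOf_fresh h (M []) hI.infinite_range
  obtain ⟨l, hl⟩ := exists_memoRun_seg_eq_some (h := h) (a := M []) (I := I)
      (t₀ := Nat.nth (Fresh h (M []) I) n₀) (e := e) fun t ht => by
    rw [map_fst_memoRun_seg hM]
    refine hconv _ ?_
    rw [← Nat.count_nth_of_infinite hinf n₀]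
    exact Nat.count_monotone _ ht
  refine ⟨Nat.nth (Fresh h (M []) I) n₀, code (e, l), (hcode _).trans hW, fun t ht => ?_⟩
  simp only [hl t ht, Part.map_some]

/-- For every iterative learner `M` from informant there is a canny iterative
learner `N` with `InfEx(M) ⊆ InfEx(N)`. -/
theorem canny_normal_form (M : List Datum →. ℕ) (hM : Partrec M) (hit : Iterative M) :
    ∃ N : List Datum →. ℕ, Partrec N ∧ Iterative N ∧ Canny N ∧
      ∀ L : Set ℕ, ExLearns M L → ExLearns N L := by
  obtain ⟨h, hh, hstep⟩ := hit
  have hN : Iterative fun σ => (memoRun h (M []) σ).map padIndex :=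
    iterative_map_runFrom (memoStep_partrec hh) _ padIndex_computable padIndex_injective
  exact ⟨_, hN.partrec, hN, canny_map_memoRun h (M []) padIndex,
    fun _ hL => hL.map_memoRun hstep W_padIndex⟩
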